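/- Let n ≥ 1 and let t, y_1, …, y_n be nonzero complex numbers with t ≠ 1, y_1^2 ≠ 1, and t y_1 ≠ t^{±1} y_i^{±1} for all relevant indices so that x = t y_1 is a simple pole of the function g(x) = (1/x) · ∏_{i=1}^n [(1 − y_i/x)(1 − y_i^{−1}/x)] / [(1 − t y_i/x)(1 − t y_i^{−1}/x)]. Then the residue of g at x = t y_1, i.e. lim_{x → t y_1} (x − t y_1) g(x), equals t^{1−2n} · (1 − t^{−1})(1 − t y_1^2)/(1 − y_1^2) · ∏_{2≤j≤n} [(1 − t y_1 y_j)(1 − t y_1/y_j)] / [(1 − y_1 y_j)(1 − y_1/y_j)]. -/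

import Mathlib

open Finset Filter Topology

noncomputable section

/-!
Up to the power `x⁻²`, the polynomial `(1 - y / x) (1 - y⁻¹ / x)` in `x⁻¹` is its own reversal
`(1 - x y) (1 - x / y)`. The numerator of the `y`-factor of `g` is this expression at `x`, and the
denominator is the same expression at `x / t`, so at `x = t y₁` each regular factor contributes
`t⁻²` times the claimed ratio. In the factor of `y₁`, the vanishing term `1 - t y₁ / x` combines
with the prefactor `x⁻¹` to `(x - t y₁)⁻¹`, and what remains is continuous at `t y₁`.
-/

section ShiftFactor

variable {K : Type*} [Field K] {t x y z : K}

/-- The factor of `g` attached to one variable `y`. -/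
def shiftFactor (t y x : K) : K :=
  ((1 - y / x) * (1 - y⁻¹ / x)) / ((1 - t * y / x) * (1 - t * y⁻¹ / x))

/-- The shift factor with the term `1 - t * y / x`, responsible for its pole at `x = t * y`,
removed from the denominator. -/
def shiftFactorRegularPart (t y x : K) : K :=
  ((1 - y / x) * (1 - y⁻¹ / x)) / (1 - t * y⁻¹ / x)

theorem shiftFactor_eq_regularPart_div :
    shiftFactor t y x = shiftFactorRegularPart t y x / (1 - t * y / x) :=
  div_mul_eq_div_div_swap _ _ _

theorem one_sub_div_ne_zero (h : x ≠ y) : 1 - y / x ≠ 0 :=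
  sub_ne_zero.mpr fun hone ↦ h (eq_of_div_eq_one hone.symm).symm

theorem one_sub_div_mul_one_sub_inv_div (hx : x ≠ 0) (hy : y ≠ 0) :
    (1 - y / x) * (1 - y⁻¹ / x) = (x ^ 2)⁻¹ * ((1 - x * y) * (1 - x / y)) := by
  field_simp
  ring

theorem shiftFactor_apply_mul (ht : t ≠ 0) (hz : z ≠ 0) (hy : y ≠ 0) :
    shiftFactor t y (t * z) =
      (t ^ 2)⁻¹ * (((1 - t * z * y) * (1 - t * z / y)) / ((1 - z * y) * (1 - z / y))) := by
  have hscale : ((t * z) ^ 2)⁻¹ / (z ^ 2)⁻¹ = (t ^ 2)⁻¹ := by field_simp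
  rw [shiftFactor, mul_div_mul_left _ _ ht, mul_div_mul_left _ _ ht,
    one_sub_div_mul_one_sub_inv_div (mul_ne_zero ht hz) hy,
    one_sub_div_mul_one_sub_inv_div hz hy, mul_div_mul_comm, hscale]

theorem prod_shiftFactor_apply_mul {ι : Type*} [Fintype ι] {y : ι → K}
    (ht : t ≠ 0) (hz : z ≠ 0) (hy : ∀ j, y j ≠ 0) :
    ∏ j, shiftFactor t (y j) (t * z) = (t ^ (2 * Fintype.card ι))⁻¹ *
      ∏ j, ((1 - t * z * y j) * (1 - t * z / y j)) / ((1 - z * y j) * (1 - z / y j)) := by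
  simp only [shiftFactor_apply_mul ht hz (hy _), prod_mul_distrib, prod_const, card_univ,
    inv_pow, pow_mul]

theorem shiftFactorRegularPart_apply_mul_self (ht : t ≠ 0) (hy : y ≠ 0) :
    shiftFactorRegularPart t y (t * y) =
      t⁻¹ * ((1 - t⁻¹) * (1 - t * y ^ 2) / (1 - y ^ 2)) := by
  have hleft : 1 - y / (t * y) = 1 - t⁻¹ := by field_simp
  have hright : 1 - y⁻¹ / (t * y) = -(t * y ^ 2)⁻¹ * (1 - t * y ^ 2) := by field_simp; ring
  have hdenom : 1 - t * y⁻¹ / (t * y) = -(y ^ 2)⁻¹ * (1 - y ^ 2) := by field_simp; ring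
  rw [shiftFactorRegularPart, hleft, hright, hdenom]
  field_simp

end ShiftFactor

section Limit

variable {K : Type*} [Field K] [TopologicalSpace K]

theorem tendsto_sub_mul_inv_mul_div_one_sub_div [T1Space K] {f : K → K} {a : K}
    (hf : ContinuousAt f a) (ha : a ≠ 0) :
    Tendsto (fun x ↦ (x - a) * (x⁻¹ * (f x / (1 - a / x)))) (𝓝[≠] a) (𝓝 (f a)) := by
  refine (hf.tendsto.mono_left nhdsWithin_le_nhds).congr' ?_
  filter_upwards [nhdsWithin_le_nhds (isOpen_ne.mem_nhds ha), self_mem_nhdsWithin] with x hx hxa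
  have hsub : x - a ≠ 0 := sub_ne_zero.mpr hxa
  have hpole : x * (1 - a / x) = x - a := by field_simp
  rw [inv_mul_eq_div, div_div, mul_comm (1 - a / x), hpole, mul_div_cancel₀ _ hsub]

variable [IsTopologicalDivisionRing K] {t x y : K}

theorem continuousAt_one_sub_div (a : K) (hx : x ≠ 0) : ContinuousAt (fun x ↦ 1 - a / x) x :=
  continuousAt_const.sub (continuousAt_const.div continuousAt_id hx)

theorem continuousAt_shiftFactorRegularPart (hx : x ≠ 0) (hpole : x ≠ t * y⁻¹) :
    ContinuousAt (shiftFactorRegularPart t y) x :=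
  ((continuousAt_one_sub_div _ hx).mul (continuousAt_one_sub_div _ hx)).div
    (continuousAt_one_sub_div _ hx) (one_sub_div_ne_zero hpole)

theorem continuousAt_shiftFactor (hx : x ≠ 0) (hpole : x ≠ t * y) (hpole_inv : x ≠ t * y⁻¹) :
    ContinuousAt (shiftFactor t y) x := by
  have hquot : shiftFactor t y = fun x ↦ shiftFactorRegularPart t y x / (1 - t * y / x) :=
    funext fun _ ↦ shiftFactor_eq_regularPart_div
  rw [hquot]
  exact (continuousAt_shiftFactorRegularPart hx hpole_inv).div (continuousAt_one_sub_div _ hx)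
    (one_sub_div_ne_zero hpole)

end Limit

theorem residue_of_shift_factor_at_ty₁_general
    {K : Type*} [Field K] [TopologicalSpace K] [IsTopologicalDivisionRing K] [T1Space K]
    {ι : Type*} [Fintype ι] {n : ℕ} (hn : n = Fintype.card ι + 1)
    {t y₁ : K} (ht : t ≠ 0) (hy₁ : y₁ ≠ 0) (hsq : y₁ ^ 2 ≠ 1) {y : ι → K} (hy : ∀ j, y j ≠ 0)
    (hne : ∀ j, y₁ ≠ y j) (hne_inv : ∀ j, y₁ ≠ (y j)⁻¹) :
    Tendsto
      (fun x ↦ (x - t * y₁) * (x⁻¹ * shiftFactor t y₁ x * ∏ j, shiftFactor t (y j) x))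
      (𝓝[≠] (t * y₁))
      (𝓝 (t ^ (1 - 2 * (n : ℤ)) * ((1 - t⁻¹) * (1 - t * y₁ ^ 2) / (1 - y₁ ^ 2)) *
        ∏ j, ((1 - t * y₁ * y j) * (1 - t * y₁ / y j)) /
          ((1 - y₁ * y j) * (1 - y₁ / y j)))) := by
  have hpole : t * y₁ ≠ 0 := mul_ne_zero ht hy₁
  have hself_inv : y₁ ≠ y₁⁻¹ := fun h ↦ hsq (by rw [sq, ← mul_inv_cancel₀ hy₁, ← h])
  have hcont : ContinuousAt
      (fun x ↦ shiftFactorRegularPart t y₁ x * ∏ j, shiftFactor t (y j) x) (t * y₁) :=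
    (continuousAt_shiftFactorRegularPart hpole ((mul_right_injective₀ ht).ne hself_inv)).mul <|
      tendsto_finsetProd _ fun j _ ↦ continuousAt_shiftFactor hpole
        ((mul_right_injective₀ ht).ne (hne j)) ((mul_right_injective₀ ht).ne (hne_inv j))
  have hexp : t ^ (1 - 2 * (n : ℤ)) = t⁻¹ * (t ^ (2 * Fintype.card ι))⁻¹ := by
    rw [← mul_inv, ← pow_succ', ← zpow_natCast, ← zpow_neg]
    congr 1
    lia
  convert tendsto_sub_mul_inv_mul_div_one_sub_div hcont hpole using 2
  · rw [shiftFactor_eq_regularPart_div, mul_assoc, div_mul_eq_mul_div]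
  · rw [shiftFactorRegularPart_apply_mul_self ht hy₁, prod_shiftFactor_apply_mul ht hy₁ hy, hexp]
    ring

/-- The residue at `x = t y₁` of
`g(x) = x⁻¹ ∏_{i=1}^n (1-y_i/x)(1-y_i⁻¹/x)/((1-t y_i/x)(1-t y_i⁻¹/x))`,
with `y₁` listed separately and `y₂,…,y_n` indexed by `Fin (n-1)`, equals
`t^{1-2n} (1-t⁻¹)(1-t y₁²)/(1-y₁²) ∏_{2≤j≤n} (1-t y₁ y_j)(1-t y₁/y_j)/((1-y₁ y_j)(1-y₁/y_j))`. -/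
theorem residue_of_shift_factor_at_ty₁
    (n : ℕ) (hn : 1 ≤ n) (t : ℂ) (ht0 : t ≠ 0) (ht1 : t ≠ 1)
    (y₁ : ℂ) (hy₁ : y₁ ≠ 0) (y : Fin (n - 1) → ℂ) (hy : ∀ j, y j ≠ 0)
    (hsq : y₁ ^ 2 ≠ 1)
    (hsep : ∀ (j : Fin (n - 1)) (b c : Bool),
      t * y₁ ≠ (if b then t else t⁻¹) * (if c then y j else (y j)⁻¹)) :
    Tendsto
      (fun x : ℂ => (x - t * y₁) *
        (x⁻¹ * (((1 - y₁ / x) * (1 - y₁⁻¹ / x)) /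
            ((1 - t * y₁ / x) * (1 - t * y₁⁻¹ / x))) *
          ∏ j, ((1 - y j / x) * (1 - (y j)⁻¹ / x)) /
            ((1 - t * y j / x) * (1 - t * (y j)⁻¹ / x))))
      (𝓝[≠] (t * y₁))
      (𝓝 (t ^ (1 - 2 * (n : ℤ)) * ((1 - t⁻¹) * (1 - t * y₁ ^ 2) / (1 - y₁ ^ 2)) *
        ∏ j, ((1 - t * y₁ * y j) * (1 - t * y₁ / y j)) /
          ((1 - y₁ * y j) * (1 - y₁ / y j)))) :=
  residue_of_shift_factor_at_ty₁_general (by rw [Fintype.card_fin]; lia) ht0 hy₁ hsq hy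
    (fun j h ↦ hsep j true true (by simp [h])) (fun j h ↦ hsep j true false (by simp [h]))
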